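/- For positive integers p(1), ..., p(r), the number of irreducible components of the normalization of Spec(ℂ[[ξ, ξ̃₁, ..., ξ̃_r]]/(ξ = ξ̃₁^{p(1)} = ··· = ξ̃_r^{p(r)})) equals (∏_{j=1}^r p(j)) / lcm(p(1), ..., p(r)). -/

import Mathlib

open MvPowerSeries

/-- The deformation ring ℂ[[ξ, ξ̃₁, …, ξ̃_r]]/(ξ − ξ̃₁^{p 1}, …, ξ − ξ̃_r^{p r}). -/
noncomputable abbrev defRing' (r : ℕ) (p : Fin r → ℕ) : Type :=
  MvPowerSeries (Fin (r + 1)) ℂ ⧸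
    Ideal.span (Set.range fun j : Fin r =>
      (X (0 : Fin (r + 1)) : MvPowerSeries (Fin (r + 1)) ℂ) - X j.succ ^ p j)

/-!
Write `L = lcm p` and `w j = L / p j`. For every choice of roots of unity `z j ∈ μ_{p j}`, the
substitution `ξ ↦ s ^ L`, `ξⱼ ↦ z j * s ^ w j` kills the relations, and the kernels of these maps
are the minimal primes. Indeed, division by `ξⱼ ^ p j - ξ` brings every power series into a normal
form whose exponents satisfy `n j < p j`. If such a normal form vanishes on all the branches, its
coefficients of a given weight form a polynomial of small degrees vanishing on `∏ μ_{p j}`, so it is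
zero: the ideal of relations is the intersection of the kernels.

Two kernels agree exactly when the branches differ by a reparametrisation `s ↦ t * s` with
`t ∈ μ_L`. As the weights are coprime, `μ_L` embeds in `∏ μ_{p j}` by `t ↦ (t ^ w j)`, and its index
`∏ p j / L` is the number of minimal primes. Normalisation does not change that number, since the
integral closure has the same total ring of fractions.
-/

section MinimalPrimes

variable {R : Type*} [CommRing R]

lemma natCard_minimalPrimes_of_isLocalization {S : Type*} [CommRing S] [Algebra R S]
    {M : Submonoid R} [IsLocalization M S] (hM : M ≤ nonZeroDivisors R) :
    Nat.card (minimalPrimes S) = Nat.card (minimalPrimes R) := by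
  have hbot : (⊥ : Ideal S).comap (algebraMap R S) = ⊥ :=
    (RingHom.injective_iff_ker_eq_bot _).1 (IsLocalization.injective S hM)
  change _ = Nat.card (⊥ : Ideal R).minimalPrimes
  rw [← hbot, IsLocalization.minimalPrimes_comap M S]
  exact (Nat.card_image_of_injective (IsLocalization.orderEmbedding M S).injective _).symm

lemma isLocalization_subalgebra {Q : Type*} [CommRing Q] [Algebra R Q] (M : Submonoid R)
    [IsLocalization M Q] (A : Subalgebra R Q) :
    IsLocalization (Algebra.algebraMapSubmonoid A M) Q where
  map_units := by
    rintro ⟨_, m, hm, rfl⟩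
    exact IsLocalization.map_units Q ⟨m, hm⟩
  surj x := by
    obtain ⟨⟨a, m⟩, h⟩ := IsLocalization.surj M x
    exact ⟨⟨algebraMap R A a, ⟨algebraMap R A m, m, m.2, rfl⟩⟩, h⟩
  exists_of_eq h := ⟨1, by rw [Subtype.val_injective h]⟩

lemma natCard_minimalPrimes_subalgebra {Q : Type*} [CommRing Q] [Algebra R Q] {M : Submonoid R}
    [IsLocalization M Q] (hM : M ≤ nonZeroDivisors R) (A : Subalgebra R Q) :
    Nat.card (minimalPrimes A) = Nat.card (minimalPrimes R) := by
  have := isLocalization_subalgebra M A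
  have hM' : Algebra.algebraMapSubmonoid A M ≤ nonZeroDivisors A :=
    le_nonZeroDivisors_iff_isRegular.2
      ((IsLocalization.injective_iff_isRegular (S := Q) (Algebra.algebraMapSubmonoid A M)).1
        Subtype.val_injective)
  rw [← natCard_minimalPrimes_of_isLocalization (S := Q) hM',
    natCard_minimalPrimes_of_isLocalization (S := Q) (M := M) hM]

lemma natCard_irreducibleComponents_primeSpectrum :
    Nat.card (irreducibleComponents (PrimeSpectrum R)) = Nat.card (minimalPrimes R) :=
  Nat.card_congr ((minimalPrimes.equivIrreducibleComponents R).toEquiv.trans OrderDual.ofDual).symm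

variable (R) in
lemma natCard_irreducibleComponents_normalization :
    Nat.card (irreducibleComponents (PrimeSpectrum
      (integralClosure R (Localization (nonZeroDivisors R))))) = Nat.card (minimalPrimes R) :=
  natCard_irreducibleComponents_primeSpectrum.trans (natCard_minimalPrimes_subalgebra le_rfl _)

lemma natCard_minimalPrimes_quotient (I : Ideal R) :
    Nat.card (minimalPrimes (R ⧸ I)) = Nat.card I.minimalPrimes := by
  rw [Ideal.minimalPrimes_eq_comap]
  exact (Nat.card_image_of_injective
    (Ideal.comap_injective_of_surjective _ Ideal.Quotient.mk_surjective) _).symm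

lemma minimalPrimes_iInf_eq_range {ι : Type*} [Finite ι] {P : ι → Ideal R}
    (hprime : ∀ i, (P i).IsPrime) (hle : ∀ i j, P i ≤ P j → P i = P j) :
    (⨅ i, P i).minimalPrimes = Set.range P := by
  have exists_le (Q : Ideal R) [hQ : Q.IsPrime] (h : ⨅ i, P i ≤ Q) : ∃ i, P i ≤ Q := by
    cases nonempty_fintype ι
    rw [← Finset.inf_univ_eq_iInf, hQ.inf_le'] at h
    simpa using h
  ext Q
  constructor
  · rintro ⟨⟨_, hQ⟩, hmin⟩
    obtain ⟨i, hi⟩ := exists_le Q hQ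
    exact ⟨i, hi.antisymm (hmin ⟨hprime i, iInf_le P i⟩ hi)⟩
  · rintro ⟨j, rfl⟩
    refine ⟨⟨hprime j, iInf_le P j⟩, fun Q ⟨_, hQ⟩ hQj => ?_⟩
    obtain ⟨i, hi⟩ := exists_le Q hQ
    exact (hle i j (hi.trans hQj)).ge.trans hi

end MinimalPrimes

lemma natCard_range_eq_index {G α : Type*} [Group G] (H : Subgroup G) {f : G → α}
    (hf : ∀ x y, f x = f y ↔ x⁻¹ * y ∈ H) : Nat.card (Set.range f) = H.index := by
  have hker : Setoid.ker f = QuotientGroup.leftRel H :=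
    Setoid.ext fun x y => (hf x y).trans QuotientGroup.leftRel_apply.symm
  rw [← Nat.card_congr (Setoid.quotientKerEquivRange f), hker, Subgroup.index_eq_card]
  rfl

section Division

variable {σ k : Type*} [CommRing k]

/-- The quotient in the division of `f` by `X i ^ e - X a`: the sum over `m` of
`X a ^ m * f / X i ^ ((m + 1) * e)`, keeping only monomials with nonnegative exponents. It comes
from the geometric series for `1 / (X i ^ e - X a)`. -/
noncomputable def divXPowSubX (a i : σ) (e : ℕ) (f : MvPowerSeries σ k) :
    MvPowerSeries σ k := fun n =>
  ∑ m ∈ Finset.range (n a + 1), coeff (n - Finsupp.single a m + Finsupp.single i ((m + 1) * e)) f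

lemma coeff_divXPowSubX (a i : σ) (e : ℕ) (f : MvPowerSeries σ k) (n : σ →₀ ℕ) :
    coeff n (divXPowSubX a i e f) = ∑ m ∈ Finset.range (n a + 1),
      coeff (n - Finsupp.single a m + Finsupp.single i ((m + 1) * e)) f :=
  rfl

lemma coeff_X_mul_divXPowSubX (a i : σ) (e : ℕ) (f : MvPowerSeries σ k) (n : σ →₀ ℕ) :
    coeff n (X a * divXPowSubX a i e f) = ∑ m ∈ Finset.range (n a),
      coeff (n - Finsupp.single a (m + 1) + Finsupp.single i ((m + 1) * e)) f := by
  rw [X_def, coeff_monomial_mul]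
  rcases Nat.eq_zero_or_pos (n a) with h0 | h0
  · simp [h0]
  · have ha : (n - Finsupp.single a 1 : σ →₀ ℕ) a + 1 = n a := by
      simpa using Nat.sub_add_cancel h0
    rw [if_pos (Finsupp.single_le_iff.2 h0), one_mul, coeff_divXPowSubX, ha]
    simp only [tsub_tsub, ← Finsupp.single_add, add_comm 1]

lemma coeff_X_pow_mul_divXPowSubX {a i : σ} (hia : i ≠ a) (e : ℕ) (f : MvPowerSeries σ k)
    (n : σ →₀ ℕ) :
    coeff n (X i ^ e * divXPowSubX a i e f) = if e ≤ n i then ∑ m ∈ Finset.range (n a + 1),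
      coeff (n - Finsupp.single a m + Finsupp.single i (m * e)) f else 0 := by
  rw [X_pow_eq, coeff_monomial_mul]
  simp only [Finsupp.single_le_iff, one_mul, coeff_divXPowSubX]
  split_ifs with hP
  · have ha : (n - Finsupp.single i e : σ →₀ ℕ) a = n a := by simp [hia]
    have hexp (m : ℕ) :
        n - Finsupp.single i e - Finsupp.single a m + Finsupp.single i ((m + 1) * e) =
          n - Finsupp.single a m + Finsupp.single i (m * e) := by
      ext j
      rcases eq_or_ne j i with rfl | hj
      · have hj : Finsupp.single a m j = 0 := Finsupp.single_eq_of_ne hia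
        simp only [Finsupp.add_apply, Finsupp.tsub_apply, Finsupp.single_eq_same, hj, add_mul]
        omega
      · simp [hj]
    simp only [ha, hexp]
  · rfl

lemma coeff_sub_mul_divXPowSubX {a i : σ} (hia : i ≠ a) (e : ℕ) (f : MvPowerSeries σ k)
    (n : σ →₀ ℕ) :
    coeff n (f - (X i ^ e - X a) * divXPowSubX a i e f) = if e ≤ n i then 0 else
      ∑ m ∈ Finset.range (n a + 1),
        coeff (n - Finsupp.single a m + Finsupp.single i (m * e)) f := by
  rw [sub_mul, map_sub, map_sub, coeff_X_pow_mul_divXPowSubX hia, coeff_X_mul_divXPowSubX]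
  split_ifs <;> rw [Finset.sum_range_succ'] <;> simp [add_comm]

variable (k) in
/-- The ideal of the curve germ on which `X a` equals `X i ^ q i` for every `i`. The exponent `q a`
is meant to be `1`, so that the relation indexed by `a` is trivial. -/
noncomputable def curveIdeal (q : σ → ℕ) (a : σ) : Ideal (MvPowerSeries σ k) :=
  Ideal.span (Set.range fun i => X a - X i ^ q i)

lemma exists_sub_mem_curveIdeal_and_coeff_eq_zero (q : σ → ℕ) (a : σ) (s : Finset σ)
    (f : MvPowerSeries σ k) :
    ∃ g, f - g ∈ curveIdeal k q a ∧ ∀ n, ∀ i ∈ s, i ≠ a → q i ≤ n i → coeff n g = 0 := by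
  classical
  induction s using Finset.induction_on with
  | empty => exact ⟨f, by simp, by simp⟩
  | insert j s _ ih =>
    obtain ⟨g, hfg, hg⟩ := ih
    rcases eq_or_ne j a with rfl | hja
    · exact ⟨g, hfg, fun n i hi hij => hg n i (Finset.mem_of_mem_insert_of_ne hi hij) hij⟩
    refine ⟨g - (X j ^ q j - X a) * divXPowSubX a j (q j) g, ?_, fun n i hi hia hn => ?_⟩
    · rw [← sub_add, ← neg_sub (X a), neg_mul, ← sub_eq_add_neg]
      exact sub_mem hfg (Ideal.mul_mem_right _ _ (Ideal.subset_span ⟨j, rfl⟩))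
    · rw [coeff_sub_mul_divXPowSubX hja]
      split_ifs with hj
      · rfl
      have hij : i ≠ j := by rintro rfl; exact hj hn
      refine Finset.sum_eq_zero fun m _ => hg _ i (Finset.mem_of_mem_insert_of_ne hi hij) hia ?_
      simpa [hia, hij] using hn

end Division

section MonomialArc

lemma prod_C_mul_X_pow_pow {σ k : Type*} [CommRing k] (w : σ → ℕ) (c : σ → k)
    (n : σ →₀ ℕ) :
    (n.prod fun i e => (PowerSeries.C (c i) * PowerSeries.X ^ w i) ^ e) =
      PowerSeries.C (n.prod fun i e => c i ^ e) * PowerSeries.X ^ Finsupp.weight w n := by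
  simp only [Finsupp.weight_apply, Finsupp.sum, Finsupp.prod, ← Finset.prod_pow_eq_pow_sum,
    map_prod, ← Finset.prod_mul_distrib, map_pow, mul_pow, ← pow_mul, smul_eq_mul, mul_comm (w _)]

variable {σ k : Type*} [Finite σ] [CommRing k] (w : σ → ℕ) [hw : ∀ i, NeZero (w i)] (c : σ → k)

lemma hasSubst_monomialArc :
    HasSubst (fun i => PowerSeries.C (c i) * PowerSeries.X ^ w i : σ → MvPowerSeries Unit k) :=
  hasSubst_of_constantCoeff_zero fun i => by
    change PowerSeries.constantCoeff _ = 0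
    simp [NeZero.ne]

/-- The restriction of power series to the monomial arc `s ↦ (c i * s ^ w i)`. -/
noncomputable def monomialArc : MvPowerSeries σ k →ₐ[k] PowerSeries k :=
  substAlgHom (hasSubst_monomialArc w c)

lemma monomialArc_monomial (n : σ →₀ ℕ) (b : k) :
    monomialArc w c (monomial n b) =
      PowerSeries.C (b * n.prod fun i e => c i ^ e) * PowerSeries.X ^ Finsupp.weight w n := by
  rw [monomialArc, substAlgHom_monomial, map_mul, mul_assoc, ← prod_C_mul_X_pow_pow]
  rfl

lemma coeff_monomialArc (d : ℕ) (f : MvPowerSeries σ k) :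
    PowerSeries.coeff d (monomialArc w c f) =
      ∑ n ∈ (Finsupp.finite_of_nat_weight_eq w (fun i => NeZero.ne (w i)) d).toFinset,
        coeff n f * n.prod fun i e => c i ^ e := by
  have hcoeff : PowerSeries.coeff d (monomialArc w c f) = ∑ᶠ n, coeff n f •
      PowerSeries.coeff d (n.prod fun i e => (PowerSeries.C (c i) * PowerSeries.X ^ w i) ^ e) := by
    rw [monomialArc, coe_substAlgHom]
    exact coeff_subst (hasSubst_monomialArc w c) f _
  simp only [hcoeff, prod_C_mul_X_pow_pow, PowerSeries.coeff_C_mul_X_pow, smul_eq_mul, mul_ite,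
    mul_zero]
  rw [finsum_eq_sum_of_support_subset]
  · refine Finset.sum_congr rfl fun n hn => if_pos ?_
    exact ((Set.Finite.mem_toFinset _).1 hn).symm
  · intro n hn
    rw [Set.Finite.coe_toFinset]
    exact (ite_ne_right_iff.1 hn).1.symm

lemma monomialArc_pow_mul (t : k) (f : MvPowerSeries σ k) :
    monomialArc w (fun i => t ^ w i * c i) f = PowerSeries.rescale t (monomialArc w c f) := by
  ext d
  rw [PowerSeries.coeff_rescale, coeff_monomialArc, coeff_monomialArc, Finset.mul_sum]
  refine Finset.sum_congr rfl fun n hn => ?_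
  have hd : (n.prod fun i e => t ^ (w i * e)) = t ^ d := by
    have : Finsupp.weight w n = d := by simpa using hn
    rw [← this, Finsupp.weight_apply, Finsupp.sum, ← Finset.prod_pow_eq_pow_sum]
    simp [Finsupp.prod, mul_comm]
  simp only [mul_pow, ← pow_mul, Finsupp.prod_mul, hd]
  ring

variable {w c} in
lemma prod_mul_prod_eq_of_ker_le {c' : σ → k}
    (h : RingHom.ker (monomialArc w c) ≤ RingHom.ker (monomialArc w c'))
    {n m : σ →₀ ℕ} (hnm : Finsupp.weight w n = Finsupp.weight w m) :
    (m.prod fun i e => c i ^ e) * (n.prod fun i e => c' i ^ e) =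
      (n.prod fun i e => c i ^ e) * (m.prod fun i e => c' i ^ e) := by
  have hmem : monomial n (m.prod fun i e => c i ^ e) - monomial m (n.prod fun i e => c i ^ e) ∈
      RingHom.ker (monomialArc w c) := by
    rw [RingHom.mem_ker, map_sub, monomialArc_monomial, monomialArc_monomial, hnm,
      mul_comm (n.prod _), sub_self]
  have hzero := h hmem
  rw [RingHom.mem_ker, map_sub, monomialArc_monomial, monomialArc_monomial, hnm, ← sub_mul,
    ← map_sub] at hzero
  have hcoeff := congrArg (PowerSeries.coeff (Finsupp.weight w m)) hzero
  rwa [PowerSeries.coeff_C_mul_X_pow, if_pos rfl, map_zero, sub_eq_zero] at hcoeff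

end MonomialArc

section RootsOfUnity

variable {σ k : Type*} [Fintype σ] [CommRing k] (q : σ → ℕ)

/-- The exponent `lcm q / q i` of the coordinate `X i` along a branch of `curveIdeal k q a`, on
which each `X i ^ q i` is the power `lcm q` of the parameter. -/
def arcWeight (i : σ) : ℕ :=
  Finset.univ.lcm q / q i

lemma arcWeight_mul_self (i : σ) : arcWeight q i * q i = Finset.univ.lcm q :=
  Nat.div_mul_cancel (Finset.dvd_lcm (Finset.mem_univ i))

variable (k) in
/-- The action of reparametrisations `s ↦ t * s` on the coefficients of a branch: a root of unity
`t` is sent to the family of its powers `t ^ arcWeight q i`. -/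
def diagonalRoots : rootsOfUnity (Finset.univ.lcm q) k →* ∀ i, rootsOfUnity (q i) k where
  toFun t i := ⟨(t : kˣ) ^ arcWeight q i, by
    rw [mem_rootsOfUnity, ← pow_mul, arcWeight_mul_self]
    exact t.2⟩
  map_one' := by ext; simp
  map_mul' s t := by ext; simp [mul_pow]

@[simp]
lemma coe_diagonalRoots (t : rootsOfUnity (Finset.univ.lcm q) k) (i : σ) :
    (diagonalRoots k q t i : kˣ) = (t : kˣ) ^ arcWeight q i :=
  rfl

variable {q} in
lemma coe_pow_univ_lcm (z : ∀ i, rootsOfUnity (q i) k) (i : σ) :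
    (z i : kˣ) ^ Finset.univ.lcm q = 1 := by
  rw [← arcWeight_mul_self q i, mul_comm, pow_mul, (z i).2, one_pow]

variable [hq : ∀ i, NeZero (q i)]

instance neZero_univ_lcm : NeZero (Finset.univ.lcm q) :=
  ⟨by simp [Finset.lcm_eq_zero_iff, NeZero.ne]⟩

instance neZero_arcWeight (i : σ) : NeZero (arcWeight q i) :=
  ⟨left_ne_zero_of_mul (arcWeight_mul_self q i ▸ NeZero.ne (Finset.univ.lcm q))⟩

variable {q} in
lemma eq_one_of_forall_dvd_arcWeight {d : ℕ} (hd : d ∣ Finset.univ.lcm q)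
    (h : ∀ i, d ∣ arcWeight q i) : d = 1 := by
  obtain ⟨m, hm⟩ := hd
  have hdm : d * m ≠ 0 := hm ▸ NeZero.ne (Finset.univ.lcm q)
  have hdvd : Finset.univ.lcm q ∣ m := Finset.lcm_dvd fun i _ => by
    refine Nat.dvd_of_mul_dvd_mul_left (Nat.pos_of_ne_zero (left_ne_zero_of_mul hdm)) ?_
    rw [← hm, ← arcWeight_mul_self q i]
    exact mul_dvd_mul_right (h i) _
  rw [hm] at hdvd
  exact Nat.dvd_one.1 (Nat.dvd_of_mul_dvd_mul_right
    (Nat.pos_of_ne_zero (right_ne_zero_of_mul hdm)) (by rwa [one_mul]))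

lemma exists_weight_arcWeight_eq_one_add_lcm_mul [Nonempty σ] :
    ∃ (u : σ →₀ ℕ) (m : ℕ), Finsupp.weight (arcWeight q) u = 1 + Finset.univ.lcm q * m := by
  have hgcd : Nat.setGcd (Set.range (arcWeight q)) = 1 := by
    have h (i : σ) := Nat.setGcd_dvd_of_mem (Set.mem_range_self (f := arcWeight q) i)
    obtain ⟨i⟩ := ‹Nonempty σ›
    exact eq_one_of_forall_dvd_arcWeight
      ((h i).trans ⟨q i, (arcWeight_mul_self q i).symm⟩) h
  obtain ⟨m, hm⟩ := Nat.exists_mem_closure_of_ge (Set.range (arcWeight q))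
  have hle : m ≤ 1 + Finset.univ.lcm q * m :=
    (Nat.le_mul_of_pos_left m (NeZero.pos _)).trans (Nat.le_add_left _ _)
  obtain ⟨u, hu⟩ := AddSubmonoid.mem_closure_range_iff.1 (hm _ hle (by rw [hgcd]; exact one_dvd _))
  exact ⟨u, m, by rw [hu, Finsupp.weight_apply]⟩

lemma diagonalRoots_injective : Function.Injective (diagonalRoots k q) := by
  refine (injective_iff_map_eq_one _).2 fun t ht => ?_
  have horder : orderOf (t : kˣ) = 1 := eq_one_of_forall_dvd_arcWeight (q := q)
    (orderOf_dvd_of_pow_eq_one t.2) fun i =>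
      orderOf_dvd_of_pow_eq_one (by rw [← coe_diagonalRoots, ht]; rfl)
  exact Subtype.ext (orderOf_eq_one_iff.1 horder)

variable (k) in
lemma index_range_diagonalRoots [HasEnoughRootsOfUnity k (Finset.univ.lcm q)] :
    (diagonalRoots k q).range.index = (∏ i, q i) / Finset.univ.lcm q := by
  have hdiag : Nat.card (diagonalRoots k q).range = Finset.univ.lcm q :=
    (Nat.card_congr
      (MonoidHom.ofInjective (diagonalRoots_injective q)).toEquiv.symm).trans
        (HasEnoughRootsOfUnity.natCard_rootsOfUnity k _)
  have hall : Nat.card (∀ i, rootsOfUnity (q i) k) = ∏ i, q i := by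
    rw [Nat.card_pi]
    refine Finset.prod_congr rfl fun i _ => ?_
    have := HasEnoughRootsOfUnity.of_dvd k (Finset.dvd_lcm (f := q) (Finset.mem_univ i))
    exact HasEnoughRootsOfUnity.natCard_rootsOfUnity k _
  refine (Nat.div_eq_of_eq_mul_right (NeZero.pos _) ?_).symm
  rw [← hall, ← (diagonalRoots k q).range.card_mul_index, hdiag]

/-- The restriction of power series to the branch `s ↦ (z i * s ^ arcWeight q i)` of the curve
germ of `curveIdeal k q a`. -/
noncomputable def branch (z : ∀ i, rootsOfUnity (q i) k) : MvPowerSeries σ k →ₐ[k] PowerSeries k :=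
  monomialArc (arcWeight q) fun i => ((z i : kˣ) : k)

variable {q}

lemma curveIdeal_le_ker_branch {a : σ} (z : ∀ i, rootsOfUnity (q i) k) (ha : q a = 1) :
    curveIdeal k q a ≤ RingHom.ker (branch q z) := by
  have hX (i : σ) : branch q z (X i ^ q i) = PowerSeries.X ^ Finset.univ.lcm q := by
    have hzi : ((z i : kˣ) : k) ^ q i = 1 := by
      rw [← Units.val_pow_eq_pow_val, (z i).2, Units.val_one]
    rw [X_pow_eq, branch, monomialArc_monomial, Finsupp.prod_single_index (by exact pow_zero _),
      hzi, one_mul, map_one, one_mul, Finsupp.weight_single, smul_eq_mul, mul_comm,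
      arcWeight_mul_self]
  refine Ideal.span_le.2 (Set.range_subset_iff.2 fun i => ?_)
  have hXa := hX a
  rw [ha, pow_one] at hXa
  rw [SetLike.mem_coe, RingHom.mem_ker, map_sub, hXa, hX, sub_self]

lemma ker_branch_mul_diagonalRoots [IsDomain k] (z : ∀ i, rootsOfUnity (q i) k)
    (t : rootsOfUnity (Finset.univ.lcm q) k) :
    RingHom.ker (branch q (z * diagonalRoots k q t)) = RingHom.ker (branch q z) := by
  have hscale (f : MvPowerSeries σ k) :
      branch q (z * diagonalRoots k q t) f = PowerSeries.rescale ((t : kˣ) : k) (branch q z f) := by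
    rw [branch, branch, ← monomialArc_pow_mul]
    simp [mul_comm]
  have hinj : Function.Injective (PowerSeries.rescale ((t : kˣ) : k)) :=
    PowerSeries.rescale_injective (Units.ne_zero _)
  ext f
  rw [RingHom.mem_ker, RingHom.mem_ker, hscale, map_eq_zero_iff _ hinj]

/-- The kernel sees the ratio of two monomials of the same weight, here
`X ^ (arcWeight q j • u)` and `X j ^ (1 + lcm q * m)`, where `z j ^ (1 + lcm q * m) = z j`. -/
lemma mul_prod_pow_eq_of_ker_branch_le {z z' : ∀ i, rootsOfUnity (q i) k}
    (h : RingHom.ker (branch q z) ≤ RingHom.ker (branch q z')) {u : σ →₀ ℕ} {m : ℕ}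
    (hu : Finsupp.weight (arcWeight q) u = 1 + Finset.univ.lcm q * m) (j : σ) :
    (z j : kˣ) * (∏ i, (z' i : kˣ) ^ u i) ^ arcWeight q j =
      (∏ i, (z i : kˣ) ^ u i) ^ arcWeight q j * (z' j : kˣ) := by
  have hz (y : ∀ i, rootsOfUnity (q i) k) : ((y j : kˣ) : k) ^ (1 + Finset.univ.lcm q * m) =
      (y j : kˣ) := by
    rw [pow_add, pow_one, pow_mul, ← Units.val_pow_eq_pow_val, coe_pow_univ_lcm, Units.val_one,
      one_pow, mul_one]
  have hweight : Finsupp.weight (arcWeight q) (arcWeight q j • u) =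
      Finsupp.weight (arcWeight q) (Finsupp.single j (1 + Finset.univ.lcm q * m)) := by
    rw [map_nsmul, hu, Finsupp.weight_single, smul_eq_mul, smul_eq_mul, mul_comm]
  have hprod := prod_mul_prod_eq_of_ker_le h hweight
  simp only [Finsupp.prod_single_index, pow_zero, hz] at hprod
  refine Units.ext ?_
  push_cast
  simpa [Finsupp.prod_fintype, pow_mul', Finset.prod_pow] using hprod

lemma inv_mul_mem_range_of_ker_branch_le {z z' : ∀ i, rootsOfUnity (q i) k}
    (h : RingHom.ker (branch q z) ≤ RingHom.ker (branch q z')) :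
    z⁻¹ * z' ∈ (diagonalRoots k q).range := by
  rcases isEmpty_or_nonempty σ with _ | _
  · exact ⟨1, Subsingleton.elim _ _⟩
  obtain ⟨u, m, hu⟩ := exists_weight_arcWeight_eq_one_add_lcm_mul q
  have hroot (y : ∀ i, rootsOfUnity (q i) k) :
      ∏ i, (y i : kˣ) ^ u i ∈ rootsOfUnity (Finset.univ.lcm q) k :=
    Subgroup.prod_mem _ fun i _ => Subgroup.pow_mem _ (coe_pow_univ_lcm y i) _
  refine ⟨⟨_, hroot z⟩⁻¹ * ⟨_, hroot z'⟩, ?_⟩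
  ext j : 2
  rw [coe_diagonalRoots]
  have hj := mul_prod_pow_eq_of_ker_branch_le h hu j
  simp only [Subgroup.coe_mul, Subgroup.coe_inv, mul_pow, inv_pow, Pi.mul_apply, Pi.inv_apply]
  rwa [inv_mul_eq_iff_eq_mul, mul_left_comm, eq_inv_mul_iff_mul_eq]

lemma ker_branch_eq_iff [IsDomain k] {z z' : ∀ i, rootsOfUnity (q i) k} :
    RingHom.ker (branch q z) = RingHom.ker (branch q z') ↔
      z⁻¹ * z' ∈ (diagonalRoots k q).range := by
  refine ⟨fun h => inv_mul_mem_range_of_ker_branch_le h.le, ?_⟩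
  rintro ⟨t, ht⟩
  rw [← ker_branch_mul_diagonalRoots z t, ht, mul_inv_cancel_left]

end RootsOfUnity

section Vanishing

variable {σ k : Type*} [Fintype σ] [CommRing k] {q : σ → ℕ} [hq : ∀ i, NeZero (q i)]

lemma eq_zero_of_eval_rootsOfUnity_eq_zero [IsDomain k]
    [HasEnoughRootsOfUnity k (Finset.univ.lcm q)] {P : MvPolynomial σ k}
    (hdeg : ∀ i, P.degreeOf i < q i)
    (heval : ∀ z : ∀ i, rootsOfUnity (q i) k, P.eval (fun i => ((z i : kˣ) : k)) = 0) : P = 0 := by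
  refine MvPolynomial.eq_zero_of_eval_zero_at_prod_finset P
    (fun i => Polynomial.nthRootsFinset (q i) 1) (fun i => ?_) fun x hx => ?_
  · have := HasEnoughRootsOfUnity.of_dvd k (Finset.dvd_lcm (f := q) (Finset.mem_univ i))
    obtain ⟨ζ, hζ⟩ := HasEnoughRootsOfUnity.exists_primitiveRoot k (q i)
    rw [hζ.card_nthRootsFinset]
    exact hdeg i
  · have hpow (i : σ) : x i ^ q i = 1 :=
      (Polynomial.mem_nthRootsFinset (NeZero.pos (q i)) 1).1 (hx i)
    exact heval fun i => rootsOfUnity.mkOfPowEq (x i) (hpow i)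

variable (q) in
/-- The polynomial whose value at `z` is the coefficient of `s ^ d` in the restriction of `f` to
the branch `z`, for `q a = 1`. In that case `z a = 1`, so the exponent of `a` is erased. -/
noncomputable def branchPolynomial (a : σ) (d : ℕ) (f : MvPowerSeries σ k) : MvPolynomial σ k :=
  ∑ n ∈ (Finsupp.finite_of_nat_weight_eq (arcWeight q) (fun _ => NeZero.ne _) d).toFinset,
    MvPolynomial.monomial (n.erase a) (coeff n f)

lemma eval_branchPolynomial {a : σ} (ha : q a = 1) (d : ℕ) (f : MvPowerSeries σ k)
    (z : ∀ i, rootsOfUnity (q i) k) :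
    (branchPolynomial q a d f).eval (fun i => ((z i : kˣ) : k)) =
      PowerSeries.coeff d (branch q z f) := by
  have hza : ((z a : kˣ) : k) = 1 := by
    simpa [ha] using congrArg Units.val ((mem_rootsOfUnity _ _).1 (z a).2)
  rw [branchPolynomial, map_sum, branch, coeff_monomialArc]
  refine Finset.sum_congr rfl fun n _ => ?_
  rw [MvPolynomial.eval_monomial, ← Finsupp.mul_prod_erase' n a _ fun _ => pow_zero _, hza,
    one_pow, one_mul]

lemma coeff_erase_branchPolynomial (a : σ) (f : MvPowerSeries σ k) (m : σ →₀ ℕ) :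
    (branchPolynomial q a (Finsupp.weight (arcWeight q) m) f).coeff (m.erase a) = coeff m f := by
  classical
  rw [branchPolynomial, MvPolynomial.coeff_sum, Finset.sum_eq_single m]
  · rw [MvPolynomial.coeff_monomial, if_pos rfl]
  · intro n hn hnm
    rw [MvPolynomial.coeff_monomial, if_neg]
    intro herase
    refine hnm ?_
    have hweight : Finsupp.weight (arcWeight q) n = Finsupp.weight (arcWeight q) m := by
      simpa using hn
    rw [← Finsupp.single_add_erase a n, ← Finsupp.single_add_erase a m, herase, map_add, map_add,
      add_left_inj, Finsupp.weight_single, Finsupp.weight_single, smul_eq_mul, smul_eq_mul,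
      mul_left_inj' (NeZero.ne _)] at hweight
    rw [← Finsupp.single_add_erase a n, ← Finsupp.single_add_erase a m, herase, hweight]
  · simp

lemma degreeOf_branchPolynomial_lt {a : σ} {f : MvPowerSeries σ k}
    (hf : ∀ n i, i ≠ a → q i ≤ n i → coeff n f = 0) (d : ℕ) (i : σ) :
    (branchPolynomial q a d f).degreeOf i < q i := by
  rw [MvPolynomial.degreeOf_lt_iff (NeZero.pos _)]
  intro e he
  classical
  obtain ⟨n, -, hn⟩ := Finset.mem_biUnion.1 (MvPolynomial.support_sum he)
  rw [MvPolynomial.mem_support_iff, MvPolynomial.coeff_monomial, ite_ne_right_iff] at hn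
  obtain ⟨rfl, hcoeff⟩ := hn
  rcases eq_or_ne i a with rfl | hia
  · simpa using NeZero.pos (q i)
  · rw [Finsupp.erase_ne hia]
    exact lt_of_not_ge fun h => hcoeff (hf n i hia h)

lemma eq_zero_of_forall_branch_eq_zero [IsDomain k] [HasEnoughRootsOfUnity k (Finset.univ.lcm q)]
    {a : σ} (ha : q a = 1) {f : MvPowerSeries σ k}
    (hf : ∀ n i, i ≠ a → q i ≤ n i → coeff n f = 0) (hbranch : ∀ z, branch q z f = 0) :
    f = 0 := by
  ext m
  have hP : branchPolynomial q a (Finsupp.weight (arcWeight q) m) f = 0 :=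
    eq_zero_of_eval_rootsOfUnity_eq_zero (degreeOf_branchPolynomial_lt hf _) fun z => by
      rw [eval_branchPolynomial ha, hbranch, map_zero]
  rw [← coeff_erase_branchPolynomial (q := q) a, hP, MvPolynomial.coeff_zero, map_zero]

end Vanishing

section CurveIdeal

variable {σ k : Type*} [Fintype σ] [CommRing k] [IsDomain k] {q : σ → ℕ} [∀ i, NeZero (q i)]
  [HasEnoughRootsOfUnity k (Finset.univ.lcm q)] {a : σ}

lemma curveIdeal_eq_iInf_ker_branch (ha : q a = 1) :
    curveIdeal k q a = ⨅ z, RingHom.ker (branch q z : MvPowerSeries σ k →ₐ[k] PowerSeries k) := by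
  refine le_antisymm (le_iInf fun z => curveIdeal_le_ker_branch z ha) fun f hf => ?_
  obtain ⟨g, hfg, hg⟩ := exists_sub_mem_curveIdeal_and_coeff_eq_zero q a Finset.univ f
  have hg0 : g = 0 := eq_zero_of_forall_branch_eq_zero ha
    (fun n i => hg n i (Finset.mem_univ i)) fun z => by
      have hfz : branch q z f = 0 := (Submodule.mem_iInf _).1 hf z
      have hfgz : branch q z (f - g) = 0 := curveIdeal_le_ker_branch z ha hfg
      rwa [map_sub, hfz, zero_sub, neg_eq_zero] at hfgz
  rwa [hg0, sub_zero] at hfg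

lemma natCard_minimalPrimes_curveIdeal (ha : q a = 1) :
    Nat.card (curveIdeal k q a).minimalPrimes = (∏ i, q i) / Finset.univ.lcm q := by
  have hle (z z' : ∀ i, rootsOfUnity (q i) k)
      (h : RingHom.ker (branch q z) ≤ RingHom.ker (branch q z')) :
      RingHom.ker (branch q z) = RingHom.ker (branch q z') :=
    ker_branch_eq_iff.2 (inv_mul_mem_range_of_ker_branch_le h)
  rw [curveIdeal_eq_iInf_ker_branch ha,
    minimalPrimes_iInf_eq_range (fun z => RingHom.ker_isPrime _) hle,
    natCard_range_eq_index _ fun _ _ => ker_branch_eq_iff, index_range_diagonalRoots]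

end CurveIdeal

/-- The ring `k[[ξ, ξ₁, …, ξᵣ]] / (ξ - ξ₁ ^ p 1, …, ξ - ξᵣ ^ p r)`, with `ξ = X 0` and
`ξⱼ = X j.succ`. -/
abbrev deformationRing (k : Type*) [CommRing k] {r : ℕ} (p : Fin r → ℕ) : Type _ :=
  MvPowerSeries (Fin (r + 1)) k ⧸
    Ideal.span (Set.range fun j : Fin r => (X 0 - X j.succ ^ p j : MvPowerSeries (Fin (r + 1)) k))

lemma curveIdeal_cons_one (k : Type*) [CommRing k] {r : ℕ} (p : Fin r → ℕ) :
    curveIdeal k (Fin.cons 1 p : Fin (r + 1) → ℕ) 0 =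
      Ideal.span (Set.range fun j : Fin r => X 0 - X j.succ ^ p j) := by
  rw [curveIdeal, Fin.range_fin_succ]
  simp [Ideal.span_insert, Fin.tail_def]

lemma univ_lcm_cons_one {r : ℕ} (p : Fin r → ℕ) :
    Finset.univ.lcm (Fin.cons 1 p : Fin (r + 1) → ℕ) = Finset.univ.lcm p := by
  refine Nat.dvd_right_iff_eq.1 fun n => ?_
  simp [Finset.lcm_dvd_iff, Fin.forall_fin_succ]

theorem stmt_5_general (k : Type*) [CommRing k] [IsDomain k] {r : ℕ} (p : Fin r → ℕ)
    (hp : ∀ j, 0 < p j) [henough : HasEnoughRootsOfUnity k (Finset.univ.lcm p)] :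
    Nat.card (irreducibleComponents (PrimeSpectrum
        (integralClosure (deformationRing k p)
          (Localization (nonZeroDivisors (deformationRing k p)))))) =
      (∏ j, p j) / Finset.univ.lcm p := by
  have hcons (i : Fin (r + 1)) : NeZero ((Fin.cons 1 p : Fin (r + 1) → ℕ) i) :=
    ⟨Fin.cases one_ne_zero (fun j => (hp j).ne') i⟩
  rw [← univ_lcm_cons_one p] at henough
  rw [natCard_irreducibleComponents_normalization, natCard_minimalPrimes_quotient,
    ← curveIdeal_cons_one, natCard_minimalPrimes_curveIdeal (Fin.cons_zero _ _),
    univ_lcm_cons_one, Fin.prod_univ_succ, Fin.cons_zero, one_mul]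
  simp only [Fin.cons_succ]

set_option synthInstance.maxHeartbeats 1000000 in
/-- The number of irreducible components of the normalization (the
spectrum of the integral closure of R in its total ring of fractions) of
Spec ℂ[[ξ, ξ̃₁, …, ξ̃_r]]/(ξ = ξ̃₁^{p 1} = ⋯ = ξ̃_r^{p r}) equals
(∏ p j)/lcm(p 1, …, p r). -/
theorem stmt_5 (r : ℕ) (p : Fin r → ℕ) (hp : ∀ j, 0 < p j) :
    Nat.card (irreducibleComponents (PrimeSpectrum
        (integralClosure (defRing' r p)
          (Localization (nonZeroDivisors (defRing' r p))))))
    = (∏ j, p j) / Finset.univ.lcm p := by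
  have (j : Fin r) : NeZero (p j) := ⟨(hp j).ne'⟩
  exact stmt_5_general ℂ p hp
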